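/- arXiv:1609.05890 — 2 statements merged into one kernel-verified Lean document; each statement's English description precedes it below -/
import Mathlib

section
/- Let A₃ be the 9×9 complex Hermitian matrix all of whose rows and columns indexed outside {1, 5, 9} are zero, and whose 3×3 principal submatrix on the index set {1, 5, 9} equals P = [[1, 9/(4√6), 3/(2√6)], [9/(4√6), 1, 1/4], [3/(2√6), 1/4, 1]]. Then A₃ ∈ C_3, rank A₃ = 2, and the face F(A₃) of C_3 generated by A₃ has dimension 1; moreover F(A₃) has exactly two extreme points and these two extreme points are entrywise complex conjugates of each other. -/
open Matrix
open scoped ComplexOrder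

noncomputable section

/-- `Cset n` is the set of n²×n² complex positive semidefinite matrices, written in block
form with blocks indexed by pairs `(i,k)` (block row `i`, inner row `k`), whose `(i,j)`
blocks have trace `δ_{ij}`.  It corresponds to the set of quantum channels via the Choi
matrix. -/
def Cset (n : ℕ) : Set (Matrix (Fin n × Fin n) (Fin n × Fin n) ℂ) :=
  {A | A.PosSemidef ∧
    ∀ i j : Fin n, ∑ k : Fin n, A (i, k) (j, k) = if i = j then 1 else 0}

/-- `F` is a face of the convex set `C`: a convex subset such that whenever a point of `F`
lies in the open segment between two points of `C`, both endpoints lie in `F`. -/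
def IsFace {V : Type*} [AddCommGroup V] [Module ℝ V] (C F : Set V) : Prop :=
  F ⊆ C ∧ Convex ℝ F ∧
    ∀ x ∈ C, ∀ y ∈ C, ∀ t : ℝ, 0 < t → t < 1 → t • x + (1 - t) • y ∈ F → x ∈ F ∧ y ∈ F

/-- The face of `C` generated by `A`: the smallest face of `C` containing `A`. -/
def faceGen {V : Type*} [AddCommGroup V] [Module ℝ V] (C : Set V) (A : V) : Set V :=
  ⋂₀ {F : Set V | IsFace C F ∧ A ∈ F}

/-- The dimension of a face: the dimension of its affine hull as a real affine subspace. -/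
def faceDim {V : Type*} [AddCommGroup V] [Module ℝ V] (F : Set V) : ℕ :=
  Module.finrank ℝ ↥(vectorSpan ℝ F)

/-- The 3×3 matrix `P` of equation (2.28). -/
def P3 : Matrix (Fin 3) (Fin 3) ℂ :=
  !![1, ((9 / (4 * Real.sqrt 6) : ℝ) : ℂ), ((3 / (2 * Real.sqrt 6) : ℝ) : ℂ);
     ((9 / (4 * Real.sqrt 6) : ℝ) : ℂ), 1, 1 / 4;
     ((3 / (2 * Real.sqrt 6) : ℝ) : ℂ), 1 / 4, 1]

/-- The 9×9 matrix `A₃` of equation (2.29): all rows and columns outside the index set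
`{1,5,9}` (i.e. outside the "diagonal" pair indices `(i,i)`) vanish, and the principal
submatrix on `{1,5,9}` is `P3`. -/
def A3 : Matrix (Fin 3 × Fin 3) (Fin 3 × Fin 3) ℂ :=
  fun p q => if p.1 = p.2 ∧ q.1 = q.2 then P3 p.1 q.1 else 0

/-!
`P3` is a cosine matrix: its entries are `Re (u i * star (u j))` for three unimodular numbers `u i`,
so `A3` is the midpoint of the rank-one Choi matrices `X = x x*` and `Y = y y*` of the two diagonal
unitary channels given by `u` and its conjugate. A point of the face of `A3` vanishes on the kernel
of `A3`, hence equals `a X + b Y + c x y* + d y x*` with `[a, c; d, b]` positive semidefinite. The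
trace conditions say that `c z + d z⁻¹ = 1 - a - b` for each of the three values `z = u i ^ 2`.
These are distinct, while a nonzero `c z ^ 2 - (1 - a - b) z + d` has at most two roots, so
`c = d = 0` and `a + b = 1`: the face is the segment from `X` to `Y`.
-/

section FacesAndSegments

variable {E F : Type*} [AddCommGroup E] [Module ℝ E] [AddCommGroup F] [Module ℝ F]

theorem extremePoints_image_of_injective (f : E →ᵃ[ℝ] F) (hf : Function.Injective f) (s : Set E) :
    Set.extremePoints ℝ (f '' s) = f '' Set.extremePoints ℝ s := by
  ext y
  constructor
  · rintro ⟨⟨x, hx, rfl⟩, hext⟩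
    refine ⟨x, ⟨hx, fun x₁ hx₁ x₂ hx₂ hx₁₂ => hf ?_⟩, rfl⟩
    exact hext (Set.mem_image_of_mem f hx₁) (Set.mem_image_of_mem f hx₂)
      (image_openSegment ℝ f x₁ x₂ ▸ Set.mem_image_of_mem f hx₁₂)
  · rintro ⟨x, ⟨hx, hext⟩, rfl⟩
    refine ⟨Set.mem_image_of_mem f hx, ?_⟩
    rintro _ ⟨x₁, hx₁, rfl⟩ _ ⟨x₂, hx₂, rfl⟩ hx₁₂
    rw [← image_openSegment, hf.mem_set_image] at hx₁₂
    rw [hext hx₁ hx₂ hx₁₂]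

theorem extremePoints_segment {x y : E} (hxy : x ≠ y) :
    Set.extremePoints ℝ (segment ℝ x y) = {x, y} := by
  rw [segment_eq_image_lineMap,
    extremePoints_image_of_injective _ (AffineMap.lineMap_injective ℝ hxy),
    Set.extremePoints_Icc zero_le_one, Set.image_pair, AffineMap.lineMap_apply_zero,
    AffineMap.lineMap_apply_one]

theorem faceDim_segment {x y : E} (hxy : x ≠ y) : faceDim (segment ℝ x y) = 1 := by
  rw [faceDim, vectorSpan_segment]
  exact finrank_span_singleton (sub_ne_zero.2 hxy.symm)

theorem IsFace.endpoints_mem {C S : Set E} (hS : IsFace C S) {x y a : E} (hx : x ∈ C) (hy : y ∈ C)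
    (ha : a ∈ openSegment ℝ x y) (haS : a ∈ S) : x ∈ S ∧ y ∈ S := by
  obtain ⟨s, t, hs, ht, hst, rfl⟩ := ha
  obtain rfl : t = 1 - s := by linarith
  exact hS.2.2 x hx y hy s hs (by linarith) haS

theorem faceGen_eq_segment {C S : Set E} {x y a : E} (hx : x ∈ C) (hy : y ∈ C)
    (ha : a ∈ openSegment ℝ x y) (hS : IsFace C S) (haS : a ∈ S) (hSxy : S ⊆ segment ℝ x y) :
    faceGen C a = segment ℝ x y := by
  apply Set.Subset.antisymm
  · exact (Set.sInter_subset_of_mem (show IsFace C S ∧ a ∈ S from ⟨hS, haS⟩)).trans hSxy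
  · rintro z hz T ⟨hT, haT⟩
    obtain ⟨hxT, hyT⟩ := hT.endpoints_mem hx hy ha haT
    exact hT.2.1.segment_subset hxT hyT hz

end FacesAndSegments

section PosSemidef

variable {𝕜 m k : Type*} [RCLike 𝕜] [Fintype m] [Fintype k]

theorem posSemidef_add_mulVec_eq_zero_iff {A B : Matrix m m 𝕜} (hA : A.PosSemidef)
    (hB : B.PosSemidef) (v : m → 𝕜) : (A + B) *ᵥ v = 0 ↔ A *ᵥ v = 0 ∧ B *ᵥ v = 0 := by
  rw [← (hA.add hB).dotProduct_mulVec_zero_iff, ← hA.dotProduct_mulVec_zero_iff,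
    ← hB.dotProduct_mulVec_zero_iff, add_mulVec, dotProduct_add]
  exact add_eq_zero_iff_of_nonneg (hA.dotProduct_mulVec_nonneg v) (hB.dotProduct_mulVec_nonneg v)

theorem exists_mul_eq_one_of_mulVec_injective [DecidableEq k] {V : Matrix m k 𝕜}
    (hV : Function.Injective V.mulVec) : ∃ L : Matrix k m 𝕜, L * V = 1 := by
  have hdet : IsUnit (Vᴴ * V).det :=
    (isUnit_iff_isUnit_det _).1 (PosDef.conjTranspose_mul_self V hV).isUnit
  exact ⟨(Vᴴ * V)⁻¹ * Vᴴ, by rw [Matrix.mul_assoc, nonsing_inv_mul _ hdet]⟩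

theorem exists_posSemidef_eq_mul_mul_conjTranspose {V : Matrix m k 𝕜} {B : Matrix m m 𝕜}
    (hV : Function.Injective V.mulVec) (hB : B.PosSemidef)
    (hker : ∀ v, Vᴴ *ᵥ v = 0 → B *ᵥ v = 0) :
    ∃ M : Matrix k k 𝕜, M.PosSemidef ∧ B = V * M * Vᴴ := by
  classical
  obtain ⟨L, hLV⟩ := exists_mul_eq_one_of_mulVec_injective hV
  have hVL : Vᴴ * Lᴴ = 1 := by rw [← conjTranspose_mul, hLV, conjTranspose_one]
  have hright : B * (Lᴴ * Vᴴ) = B := by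
    refine ext_of_mulVec_single fun i => (sub_eq_zero.1 ?_).symm
    have hproj : Vᴴ *ᵥ (Pi.single i 1 - (Lᴴ * Vᴴ) *ᵥ Pi.single i 1) = 0 := by
      rw [mulVec_sub, mulVec_mulVec, ← Matrix.mul_assoc, hVL, Matrix.one_mul, sub_self]
    rw [← mulVec_mulVec, ← mulVec_sub, hker _ hproj]
  have hleft : V * L * B = B := by
    simpa [conjTranspose_mul, hB.isHermitian.eq] using congrArg conjTranspose hright
  refine ⟨L * B * Lᴴ, hB.mul_mul_conjTranspose_same L, ?_⟩
  calc B = V * L * (B * (Lᴴ * Vᴴ)) := by rw [hright, hleft]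
    _ = V * (L * B * Lᴴ) * Vᴴ := by simp only [Matrix.mul_assoc]

end PosSemidef

theorem convex_Cset (n : ℕ) : Convex ℝ (Cset n) := by
  intro A hA B hB a b ha hb hab
  refine ⟨(hA.1.smul ha).add (hB.1.smul hb), fun i j => ?_⟩
  simp only [Matrix.add_apply, Matrix.smul_apply, Finset.sum_add_distrib, ← Finset.smul_sum,
    hA.2, hB.2, ← add_smul, hab, one_smul]

theorem isFace_Cset_setOf_mulVec_eq_zero {n : ℕ} (K : Set (Fin n × Fin n → ℂ)) :
    IsFace (Cset n) {B ∈ Cset n | ∀ v ∈ K, B *ᵥ v = 0} := by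
  refine ⟨fun B hB => hB.1, ?_, ?_⟩
  · intro A hA B hB a b ha hb hab
    refine ⟨convex_Cset n hA.1 hB.1 ha hb hab, fun v hv => ?_⟩
    rw [add_mulVec, smul_mulVec, smul_mulVec, hA.2 v hv, hB.2 v hv, smul_zero, smul_zero, add_zero]
  · intro A hA B hB t ht₀ ht₁ hAB
    have hker : ∀ v ∈ K, A *ᵥ v = 0 ∧ B *ᵥ v = 0 := fun v hv => by
      have hsum := (posSemidef_add_mulVec_eq_zero_iff (hA.1.smul ht₀.le)
        (hB.1.smul (sub_pos.2 ht₁).le) v).1 (hAB.2 v hv)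
      simpa only [smul_mulVec, smul_eq_zero, ht₀.ne', (sub_pos.2 ht₁).ne', false_or] using hsum
    exact ⟨⟨hA, fun v hv => (hker v hv).1⟩, ⟨hB, fun v hv => (hker v hv).2⟩⟩

theorem eq_zero_of_mul_add_mul_inv_eq {K : Type*} [Field K] {c d r z₁ z₂ z₃ : K}
    (hz₁ : z₁ ≠ 0) (hz₂ : z₂ ≠ 0) (hz₃ : z₃ ≠ 0) (h₁₂ : z₁ ≠ z₂) (h₁₃ : z₁ ≠ z₃) (h₂₃ : z₂ ≠ z₃)
    (h₁ : c * z₁ + d * z₁⁻¹ = r) (h₂ : c * z₂ + d * z₂⁻¹ = r) (h₃ : c * z₃ + d * z₃⁻¹ = r) :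
    c = 0 ∧ d = 0 := by
  field_simp at h₁ h₂ h₃
  have hsum₁₂ : c * (z₁ + z₂) = r :=
    mul_right_cancel₀ (sub_ne_zero.2 h₁₂) (by linear_combination h₁ - h₂)
  have hsum₁₃ : c * (z₁ + z₃) = r :=
    mul_right_cancel₀ (sub_ne_zero.2 h₁₃) (by linear_combination h₁ - h₃)
  have hc : c = 0 := by
    refine (mul_eq_zero.1 ?_).resolve_right (sub_ne_zero.2 h₂₃)
    linear_combination hsum₁₂ - hsum₁₃
  refine ⟨hc, ?_⟩
  rw [hc, zero_mul] at hsum₁₂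
  rw [hc, ← hsum₁₂] at h₁
  simpa using h₁

theorem mul_star_self_of_norm_eq_one {z : ℂ} (hz : ‖z‖ = 1) : z * star z = 1 := by
  rw [Complex.star_def, Complex.mul_conj', hz, Complex.ofReal_one, one_pow]

/-- The Choi matrix of the map `X ↦ D X D*`, where `D` is the diagonal matrix with entries `u`.
It is supported on the pair indices `(i, i)`. -/
def diagonalChoi {n : ℕ} (u : Fin n → ℂ) : Matrix (Fin n × Fin n) (Fin n × Fin n) ℂ :=
  vecMulVec (vec (diagonal u)) (star (vec (diagonal u)))

/-- The entrywise real part of `diagonalChoi u`. For `u i = exp (θ i * I)` its entry at `(i, i)` and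
`(j, j)` is `cos (θ i - θ j)`. -/
def reDiagonalChoi {n : ℕ} (u : Fin n → ℂ) : Matrix (Fin n × Fin n) (Fin n × Fin n) ℂ :=
  (diagonalChoi u).map fun z => (z.re : ℂ)

/-- The matrix with columns `vec (diagonal u)` and `vec (diagonal (star u))`, whose column space
contains the range of every matrix in the face generated by `reDiagonalChoi u`. -/
def conjFrame {n : ℕ} (u : Fin n → ℂ) : Matrix (Fin n × Fin n) (Fin 2) ℂ :=
  (of ![vec (diagonal u), vec (diagonal (star u))])ᵀ

section ConjugatePair

variable {n : ℕ} {u : Fin n → ℂ}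

theorem diagonalChoi_apply (u : Fin n → ℂ) (p q : Fin n × Fin n) :
    diagonalChoi u p q = if p.1 = p.2 ∧ q.1 = q.2 then u p.1 * star (u q.1) else 0 := by
  obtain ⟨i, k⟩ := p
  obtain ⟨j, l⟩ := q
  by_cases hik : k = i <;> by_cases hjl : l = j <;>
    simp [diagonalChoi, vecMulVec_apply, hik, hjl, eq_comm (a := i), eq_comm (a := j)]

theorem diagonalChoi_star (u : Fin n → ℂ) :
    diagonalChoi (star u) = (diagonalChoi u).map (starRingEnd ℂ) := by
  ext p q
  simp [diagonalChoi_apply, apply_ite (starRingEnd ℂ)]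

theorem diagonalChoi_mem_Cset (hu : ∀ i, ‖u i‖ = 1) : diagonalChoi u ∈ Cset n := by
  refine ⟨posSemidef_vecMulVec_self_star _, fun i j => ?_⟩
  rcases eq_or_ne i j with rfl | hij
  · simpa [diagonalChoi_apply] using mul_star_self_of_norm_eq_one (hu i)
  · simp [diagonalChoi_apply, ite_and, hij, hij.symm]

theorem diagonalChoi_ne_star (hu : ∀ i, ‖u i‖ = 1) {i j : Fin n} (hij : u i ^ 2 ≠ u j ^ 2) :
    diagonalChoi u ≠ diagonalChoi (star u) := by
  intro h
  have hi : u i * star (u i) = 1 := mul_star_self_of_norm_eq_one (hu i)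
  have hj : u j * star (u j) = 1 := mul_star_self_of_norm_eq_one (hu j)
  have hentry : u i * star (u j) = star (u i) * u j := by
    simpa [diagonalChoi_apply] using congrFun (congrFun h (i, i)) (j, j)
  exact hij (by linear_combination u i * u j * hentry - u i ^ 2 * hj + u j ^ 2 * hi)

theorem reDiagonalChoi_eq_midpoint (u : Fin n → ℂ) :
    reDiagonalChoi u = midpoint ℝ (diagonalChoi u) (diagonalChoi (star u)) := by
  ext p q
  rw [diagonalChoi_star, midpoint_eq_smul_add]
  simp only [reDiagonalChoi, Complex.re_eq_add_conj, map_apply, invOf_eq_inv, Matrix.smul_apply,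
    Matrix.add_apply, smul_add, Complex.real_smul, Complex.ofReal_inv, Complex.ofReal_ofNat]
  ring

theorem reDiagonalChoi_mem_Cset (hu : ∀ i, ‖u i‖ = 1) : reDiagonalChoi u ∈ Cset n := by
  rw [reDiagonalChoi_eq_midpoint]
  exact (convex_Cset n).midpoint_mem (diagonalChoi_mem_Cset hu)
    (diagonalChoi_mem_Cset (by simpa using hu))

theorem conjFrame_mul_mul_conjTranspose (u : Fin n → ℂ) (M : Matrix (Fin 2) (Fin 2) ℂ) :
    conjFrame u * M * (conjFrame u)ᴴ =
      M 0 0 • diagonalChoi u + M 1 1 • diagonalChoi (star u) +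
        (M 0 1 • vecMulVec (vec (diagonal u)) (vec (diagonal u)) +
          M 1 0 • vecMulVec (vec (diagonal (star u))) (vec (diagonal (star u)))) := by
  have hstar (q : Fin n × Fin n) :
      diagonal (star u) q.2 q.1 = star (diagonal u q.2 q.1) := by
    rw [diagonal_apply, diagonal_apply, apply_ite star, star_zero, Pi.star_apply]
  ext p q
  simp only [conjFrame, diagonalChoi, Matrix.mul_apply, Fin.sum_univ_two, transpose_apply,
    conjTranspose_apply, of_apply, cons_val', cons_val_fin_one, cons_val_zero, cons_val_one,
    Fin.isValue, vec, hstar, Matrix.add_apply, Matrix.smul_apply, vecMulVec_apply, Pi.star_apply,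
    star_star, smul_eq_mul]
  ring

theorem reDiagonalChoi_eq_conjFrame_mul (u : Fin n → ℂ) :
    reDiagonalChoi u = (2⁻¹ : ℂ) • (conjFrame u * (conjFrame u)ᴴ) := by
  have hframe : conjFrame u * (conjFrame u)ᴴ = diagonalChoi u + diagonalChoi (star u) := by
    simpa using conjFrame_mul_mul_conjTranspose u 1
  rw [hframe, reDiagonalChoi_eq_midpoint, midpoint_eq_smul_add]
  ext p q
  simp [mul_add]

theorem conjFrame_mulVec_injective (hu : ∀ i, ‖u i‖ = 1) {i j : Fin n}
    (hij : u i ^ 2 ≠ u j ^ 2) : Function.Injective (conjFrame u).mulVec := by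
  refine (injective_iff_map_eq_zero (conjFrame u).mulVecLin).2 fun c hc => ?_
  have hrow (l : Fin n) : c 0 * u l ^ 2 + c 1 = 0 := by
    have hl : u l * star (u l) = 1 := mul_star_self_of_norm_eq_one (hu l)
    have hcl : u l * c 0 + star (u l) * c 1 = 0 := by
      simpa [conjFrame, vecHead, vecTail, mul_comm] using congrFun hc (l, l)
    linear_combination u l * hcl - c 1 * hl
  have hc₀ : c 0 = 0 :=
    (mul_eq_zero.1 (by linear_combination hrow i - hrow j)).resolve_right (sub_ne_zero.2 hij)
  have hc₁ : c 1 = 0 := by simpa [hc₀] using hrow i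
  ext a
  fin_cases a <;> assumption

theorem rank_reDiagonalChoi (hu : ∀ i, ‖u i‖ = 1) {i j : Fin n} (hij : u i ^ 2 ≠ u j ^ 2) :
    (reDiagonalChoi u).rank = 2 := by
  rw [reDiagonalChoi_eq_conjFrame_mul, rank_smul_of_mem_nonZeroDivisors _ (by simp),
    rank_self_mul_conjTranspose, rank,
    LinearMap.finrank_range_of_inj (conjFrame_mulVec_injective hu hij), Module.finrank_fin_fun]

theorem coeff_eq_of_conjFrame_mem_Cset (hu : ∀ i, ‖u i‖ = 1) {M : Matrix (Fin 2) (Fin 2) ℂ}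
    (hM : conjFrame u * M * (conjFrame u)ᴴ ∈ Cset n) (i : Fin n) :
    M 0 1 * u i ^ 2 + M 1 0 * (u i ^ 2)⁻¹ = 1 - (M 0 0 + M 1 1) := by
  have hui : u i * star (u i) = 1 := mul_star_self_of_norm_eq_one (hu i)
  have hinv : (u i ^ 2)⁻¹ = star (u i) ^ 2 := by
    rw [← inv_pow, inv_eq_of_mul_eq_one_right hui]
  have htrace : M 0 0 * (u i * star (u i)) + M 1 1 * (star (u i) * u i) +
      (M 0 1 * (u i * u i) + M 1 0 * (star (u i) * star (u i))) = 1 := by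
    simpa [conjFrame_mul_mul_conjTranspose, diagonalChoi_apply, vecMulVec_apply, diagonal_apply,
      Finset.sum_add_distrib] using hM.2 i i
  rw [hinv]
  linear_combination htrace - (M 0 0 + M 1 1) * hui

theorem conjFrame_mem_segment (hu : ∀ i, ‖u i‖ = 1) {i j k : Fin n} (hij : u i ^ 2 ≠ u j ^ 2)
    (hik : u i ^ 2 ≠ u k ^ 2) (hjk : u j ^ 2 ≠ u k ^ 2) {M : Matrix (Fin 2) (Fin 2) ℂ}
    (hMpos : M.PosSemidef) (hM : conjFrame u * M * (conjFrame u)ᴴ ∈ Cset n) :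
    conjFrame u * M * (conjFrame u)ᴴ ∈
      segment ℝ (diagonalChoi u) (diagonalChoi (star u)) := by
  have hne (l : Fin n) : u l ^ 2 ≠ 0 := pow_ne_zero 2 (norm_ne_zero_iff.1 (by simp [hu]))
  have hcoeff := coeff_eq_of_conjFrame_mem_Cset hu hM
  obtain ⟨h₀₁, h₁₀⟩ := eq_zero_of_mul_add_mul_inv_eq (hne i) (hne j) (hne k) hij hik hjk
    (hcoeff i) (hcoeff j) (hcoeff k)
  have hsum : M 0 0 + M 1 1 = 1 := by
    linear_combination hcoeff i - u i ^ 2 * h₀₁ - (u i ^ 2)⁻¹ * h₁₀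
  obtain ⟨a, ha, (h₀₀ : (a : ℂ) = M 0 0)⟩ :=
    RCLike.nonneg_iff_exists_ofReal.1 (hMpos.diag_nonneg (i := 0))
  obtain ⟨b, hb, (h₁₁ : (b : ℂ) = M 1 1)⟩ :=
    RCLike.nonneg_iff_exists_ofReal.1 (hMpos.diag_nonneg (i := 1))
  refine ⟨a, b, ha, hb, ?_, ?_⟩
  · rw [← h₀₀, ← h₁₁] at hsum
    exact_mod_cast hsum
  · rw [conjFrame_mul_mul_conjTranspose, h₀₁, h₁₀, ← h₀₀, ← h₁₁]
    simp

theorem faceGen_reDiagonalChoi (hu : ∀ i, ‖u i‖ = 1) {i j k : Fin n} (hij : u i ^ 2 ≠ u j ^ 2)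
    (hik : u i ^ 2 ≠ u k ^ 2) (hjk : u j ^ 2 ≠ u k ^ 2) :
    faceGen (Cset n) (reDiagonalChoi u) =
      segment ℝ (diagonalChoi u) (diagonalChoi (star u)) := by
  refine faceGen_eq_segment (diagonalChoi_mem_Cset hu) (diagonalChoi_mem_Cset (by simpa using hu))
    (reDiagonalChoi_eq_midpoint u ▸ midpoint_mem_openSegment _ _)
    (isFace_Cset_setOf_mulVec_eq_zero {v | (conjFrame u)ᴴ *ᵥ v = 0})
    ⟨reDiagonalChoi_mem_Cset hu, fun v hv => ?_⟩ ?_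
  · rw [reDiagonalChoi_eq_conjFrame_mul, smul_mulVec, ← mulVec_mulVec, hv, mulVec_zero, smul_zero]
  · rintro B ⟨hB, hker⟩
    obtain ⟨M, hM, rfl⟩ := exists_posSemidef_eq_mul_mul_conjTranspose
      (conjFrame_mulVec_injective hu hij) hB.1 hker
    exact conjFrame_mem_segment hu hij hik hjk hM hB

end ConjugatePair

theorem A3_face_general {n : ℕ} {u : Fin n → ℂ} (hu : ∀ i, ‖u i‖ = 1) {i j k : Fin n}
    (hij : u i ^ 2 ≠ u j ^ 2) (hik : u i ^ 2 ≠ u k ^ 2) (hjk : u j ^ 2 ≠ u k ^ 2) :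
    reDiagonalChoi u ∈ Cset n ∧ (reDiagonalChoi u).rank = 2 ∧
    faceDim (faceGen (Cset n) (reDiagonalChoi u)) = 1 ∧
    ∃ X Y : Matrix (Fin n × Fin n) (Fin n × Fin n) ℂ,
      X ≠ Y ∧ Set.extremePoints ℝ (faceGen (Cset n) (reDiagonalChoi u)) = {X, Y} ∧
      Y = X.map (starRingEnd ℂ) := by
  have hne : diagonalChoi u ≠ diagonalChoi (star u) := diagonalChoi_ne_star hu hij
  rw [faceGen_reDiagonalChoi hu hij hik hjk]
  exact ⟨reDiagonalChoi_mem_Cset hu, rank_reDiagonalChoi hu hij, faceDim_segment hne,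
    diagonalChoi u, diagonalChoi (star u), hne, extremePoints_segment hne, diagonalChoi_star u⟩

/-- Unimodular numbers realizing `P3` as a cosine matrix. The normalization by
`P3Phase 0 = 1` makes their real parts the first row of `P3`; the signs of the imaginary parts are
dictated by `P3 1 2 = 1 / 4`. -/
def P3Phase : Fin 3 → ℂ :=
  ![1, ⟨3 * √6 / 8, √10 / 8⟩, ⟨√6 / 4, -√10 / 4⟩]

theorem P3Phase_sq_re (i : Fin 3) : (P3Phase i ^ 2).re = ![1, 11 / 16, -1 / 4] i := by
  have h₆ : √6 ^ 2 = 6 := Real.sq_sqrt (by norm_num)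
  have h₁₀ : √10 ^ 2 = 10 := Real.sq_sqrt (by norm_num)
  fin_cases i <;> simp [P3Phase, sq]
  · linear_combination 9 / 64 * h₆ - 1 / 64 * h₁₀
  · linear_combination 1 / 16 * h₆ - 1 / 16 * h₁₀

theorem P3Phase_sq_injective : Function.Injective fun i => P3Phase i ^ 2 := by
  have hre : Function.Injective (![1, 11 / 16, -1 / 4] : Fin 3 → ℝ) := by
    intro i j h
    fin_cases i <;> fin_cases j <;> first | rfl | norm_num at h
  exact fun i j h => hre (by rw [← P3Phase_sq_re, ← P3Phase_sq_re]; exact congrArg Complex.re h)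

theorem P3_apply (i j : Fin 3) : P3 i j = ((P3Phase i * star (P3Phase j)).re : ℂ) := by
  have h₆ : √6 ^ 2 = 6 := Real.sq_sqrt (by norm_num)
  have h₀₁ : 9 / (4 * √6) = 3 * √6 / 8 := by field_simp; linear_combination -12 * h₆
  have h₀₂ : 3 / (2 * √6) = √6 / 4 := by field_simp; linear_combination -2 * h₆
  have h₆' : (√6 : ℂ) ^ 2 = 6 := by exact_mod_cast h₆
  have h₁₀' : (√10 : ℂ) ^ 2 = 10 := by exact_mod_cast Real.sq_sqrt (show (0 : ℝ) ≤ 10 by norm_num)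
  rw [P3, h₀₁, h₀₂]
  fin_cases i <;> fin_cases j <;> simp [P3Phase]
  · linear_combination -9 / 64 * h₆' - 1 / 64 * h₁₀'
  · linear_combination -3 / 32 * h₆' + 1 / 32 * h₁₀'
  · linear_combination -3 / 32 * h₆' + 1 / 32 * h₁₀'
  · linear_combination -1 / 16 * h₆' - 1 / 16 * h₁₀'

theorem norm_P3Phase (i : Fin 3) : ‖P3Phase i‖ = 1 := by
  have hdiag : P3 i i = 1 := by fin_cases i <;> rfl
  have hsq : ‖P3Phase i‖ ^ 2 = 1 := by
    rw [P3_apply, Complex.star_def, Complex.mul_conj, Complex.ofReal_re, ← Complex.sq_norm] at hdiag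
    exact_mod_cast hdiag
  exact (pow_eq_one_iff_of_nonneg (norm_nonneg _) two_ne_zero).1 hsq

theorem A3_eq_reDiagonalChoi : A3 = reDiagonalChoi P3Phase := by
  ext p q
  rw [A3, P3_apply, reDiagonalChoi, map_apply, diagonalChoi_apply]
  split_ifs <;> simp

/-- `A₃ ∈ C_3`, `rank A₃ = 2`, the face of `C_3` generated by `A₃` has dimension 1, and
it has exactly two extreme points which are entrywise complex conjugates. -/
theorem A3_face :
    A3 ∈ Cset 3 ∧ A3.rank = 2 ∧ faceDim (faceGen (Cset 3) A3) = 1 ∧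
    ∃ X Y : Matrix (Fin 3 × Fin 3) (Fin 3 × Fin 3) ℂ,
      X ≠ Y ∧ Set.extremePoints ℝ (faceGen (Cset 3) A3) = {X, Y} ∧
      Y = X.map (starRingEnd ℂ) := by
  rw [A3_eq_reDiagonalChoi]
  exact A3_face_general norm_P3Phase (P3Phase_sq_injective.ne (a₁ := 0) (a₂ := 1) (by decide))
    (P3Phase_sq_injective.ne (a₂ := 2) (by decide)) (P3Phase_sq_injective.ne (by decide))
end
end

section
/- Let n ≥ 2 be an integer and let A = (a_{kl}) ∈ C_n with rank A = 2. Suppose the rows and columns of A indexed by 2, 3, …, n are zero and a_{11} = 1 (equivalently, the quantum channel L with Choi matrix A satisfies L(E_{11}) = E_{11}). If there exists an index i with 1 < i < n², i ≡ 1 (mod n), and a_{ii} > 0, then A is an extreme point of C_n. -/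
open Matrix
open scoped ComplexOrder

noncomputable section

/-!
If `A` lies in the open segment between `B` and `C`, then `ker A ≤ ker B`, since all three matrices
are positive semidefinite. Let `e` pick the two indices `(i, l)` and `(m, l)`, where the columns
`(i, k)`, `k ≠ l`, of `A` (hence of `B`) vanish. The trace conditions make the `e × e` submatrix of
`A` diagonal with nonzero entries; as `A` has rank 2, the `e`-columns of `A`, and hence by the
kernel inclusion those of `D = B - A`, determine all the others through one matrix `Y`:
`D = Yᴴ D[e,e] Y`. The trace conditions also kill every entry of `D[e,e]` but the last one, `δ`, so
`D = δ v* v` for the last row `v` of `Y`. As `v` has the entry `1` at `(m, l)`, the vanishing trace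
of the `(m, m)` block of `D` forces `δ = 0`.
-/

section Kernel

variable {R m m' n : Type*} [CommSemiring R] [Fintype n] {A : Matrix m n R} {B : Matrix m' n R}

lemma col_eq_zero_of_ker_mulVecLin_le
    (hker : LinearMap.ker A.mulVecLin ≤ LinearMap.ker B.mulVecLin) {j : n} (hj : A.col j = 0) :
    B.col j = 0 := by
  classical
  have hsingle : Pi.single j 1 ∈ LinearMap.ker A.mulVecLin := (mulVec_single_one A j).trans hj
  exact (mulVec_single_one B j).symm.trans (hker hsingle)

lemma mul_eq_zero_of_ker_mulVecLin_le {p : Type*} {X : Matrix n p R}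
    (hker : LinearMap.ker A.mulVecLin ≤ LinearMap.ker B.mulVecLin) (hX : A * X = 0) :
    B * X = 0 := by
  ext i k
  have hcol : X.col k ∈ LinearMap.ker A.mulVecLin := funext fun r => congrFun₂ hX r k
  exact congrFun (hker hcol) i

lemma ker_mulVecLin_le_of_mem_openSegment {𝕜 : Type*} [RCLike 𝕜] {A B C : Matrix n n 𝕜}
    (hB : B.PosSemidef) (hC : C.PosSemidef) (hA : A ∈ openSegment ℝ B C) :
    LinearMap.ker A.mulVecLin ≤ LinearMap.ker B.mulVecLin := by
  obtain ⟨a, b, ha, hb, -, rfl⟩ := hA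
  intro x hx
  rw [LinearMap.mem_ker, mulVecLin_apply] at hx ⊢
  have hsum : a • (star x ⬝ᵥ B *ᵥ x) + b • (star x ⬝ᵥ C *ᵥ x) = 0 := by
    rw [← dotProduct_smul, ← dotProduct_smul, ← dotProduct_add, ← smul_mulVec, ← smul_mulVec,
      ← add_mulVec, hx, dotProduct_zero]
  have hBx : a • (star x ⬝ᵥ B *ᵥ x) = 0 :=
    ((add_eq_zero_iff_of_nonneg (smul_nonneg ha.le (hB.dotProduct_mulVec_nonneg x))
      (smul_nonneg hb.le (hC.dotProduct_mulVec_nonneg x))).1 hsum).1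
  exact (hB.dotProduct_mulVec_zero_iff x).1 ((smul_eq_zero.1 hBx).resolve_left ha.ne')

end Kernel

section Factorization

variable {m m' n κ : Type*} [Fintype n] [Fintype κ]

lemma exists_eq_submatrix_mul_of_rank_le {K : Type*} [Field K] [DecidableEq κ]
    {A : Matrix m n K} {r : κ → m} {c : κ → n} (hdet : (A.submatrix r c).det ≠ 0)
    (hrank : A.rank ≤ Fintype.card κ) :
    ∃ Y : Matrix κ n K, A = A.submatrix id c * Y ∧ Y.submatrix id c = 1 := by
  classical
  have hle : LinearMap.range (A.submatrix id c).mulVecLin ≤ LinearMap.range A.mulVecLin := by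
    rw [range_mulVecLin, range_mulVecLin]
    exact Submodule.span_mono (Set.range_subset_iff.2 fun k => ⟨c k, rfl⟩)
  have hcard : Fintype.card κ ≤ (A.submatrix id c).rank := by
    rw [← rank_of_det_ne_zero hdet]
    exact rank_submatrix_le (A.submatrix id c) r id
  have hrange : LinearMap.range (A.submatrix id c).mulVecLin = LinearMap.range A.mulVecLin :=
    Submodule.eq_of_le_of_finrank_le hle (hrank.trans hcard)
  have hcol (j : n) : ∃ y : κ → K, A.submatrix id c *ᵥ y = A.col j := by
    change A.col j ∈ LinearMap.range (A.submatrix id c).mulVecLin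
    exact hrange ▸ ⟨Pi.single j 1, mulVec_single_one A j⟩
  choose y hy using hcol
  have hfac : A = A.submatrix id c * of fun k j => y j k := by
    ext i j
    exact (congrFun (hy j) i).symm
  have hunit : IsUnit (A.submatrix r c) := (isUnit_iff_isUnit_det _).2 hdet.isUnit
  refine ⟨_, hfac, hunit.mul_left_cancel ?_⟩
  rw [mul_one]
  exact (congrArg (·.submatrix r c) hfac).symm

lemma submatrix_id_mul_eq_mul {R p : Type*} [Semiring R] [DecidableEq n] (M : Matrix m n R)
    (c : κ → n) (Y : Matrix κ p R) :
    M.submatrix id c * Y = M * ((1 : Matrix n n R).submatrix id c * Y) := by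
  rw [← Matrix.mul_assoc]
  exact congrArg (· * Y) (mul_submatrix_one (Equiv.refl n) c M).symm

lemma eq_submatrix_mul_of_ker_mulVecLin_le {R : Type*} [CommRing R] {A : Matrix m n R}
    {B : Matrix m' n R} {c : κ → n} {Y : Matrix κ n R}
    (hker : LinearMap.ker A.mulVecLin ≤ LinearMap.ker B.mulVecLin)
    (hA : A = A.submatrix id c * Y) : B = B.submatrix id c * Y := by
  classical
  have hAX : A * (1 - (1 : Matrix n n R).submatrix id c * Y) = 0 := by
    rw [Matrix.mul_sub, Matrix.mul_one, ← submatrix_id_mul_eq_mul, ← hA, sub_self]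
  have hBX := mul_eq_zero_of_ker_mulVecLin_le hker hAX
  rwa [Matrix.mul_sub, Matrix.mul_one, ← submatrix_id_mul_eq_mul, sub_eq_zero] at hBX

end Factorization

section Hermitian

variable {R ι κ : Type*} [Fintype κ]

lemma eq_conjTranspose_mul_submatrix_mul [Semiring R] [StarRing R] {D : Matrix ι ι R}
    {Y : Matrix κ ι R} {e : κ → ι} (hD : D.IsHermitian) (hfac : D = D.submatrix id e * Y) :
    D = Yᴴ * D.submatrix e e * Y := by
  have hrow : D.submatrix e id = D.submatrix e e * Y := congrArg (·.submatrix e id) hfac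
  have hcol : D.submatrix id e = Yᴴ * D.submatrix e e := by
    rw [← (hD.submatrix e).eq, ← conjTranspose_mul, ← hrow, conjTranspose_submatrix, hD.eq]
  rw [← hcol, ← hfac]

lemma conjTranspose_mul_single_mul_apply [CommSemiring R] [StarRing R] [DecidableEq κ]
    (Y : Matrix κ ι R) (j : κ) (δ : R) (r q : ι) :
    (Yᴴ * single j j δ * Y) r q = δ * (star (Y j r) * Y j q) := by
  rw [Matrix.mul_assoc, mul_apply, Finset.sum_eq_single_of_mem j (Finset.mem_univ j)]
  · rw [single_mul_apply_same, conjTranspose_apply, mul_left_comm]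
  · intro s _ hs
    rw [single_mul_apply_of_ne _ _ _ _ _ hs, mul_zero]

lemma eq_zero_of_eq_conjTranspose_mul_single_mul [CommRing R] [NoZeroDivisors R] [PartialOrder R]
    [StarRing R] [StarOrderedRing R] [DecidableEq κ] {ν : Type*} [Fintype ν]
    {D : Matrix ι ι R} {Y : Matrix κ ι R} {j : κ} {δ : R} (hD : D = Yᴴ * single j j δ * Y)
    {f : ν → ι} {k : ν} (hY : Y j (f k) ≠ 0) (htrace : (D.submatrix f f).trace = 0) : D = 0 := by
  have hmul : δ * (star (fun k => Y j (f k)) ⬝ᵥ fun k => Y j (f k)) = 0 := by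
    rw [← htrace, hD, trace, dotProduct, Finset.mul_sum]
    exact Finset.sum_congr rfl fun k _ =>
      (conjTranspose_mul_single_mul_apply Y j δ (f k) (f k)).symm
  have hδ : δ = 0 :=
    (mul_eq_zero.1 hmul).resolve_right fun h => hY (congrFun (dotProduct_star_self_eq_zero.1 h) k)
  rw [hD, hδ, single_zero, Matrix.mul_zero, Matrix.zero_mul]

end Hermitian

namespace Cset

variable {n : ℕ} {A B : Matrix (Fin n × Fin n) (Fin n × Fin n) ℂ} {i l m : Fin n}

lemma apply_eq_of_col_eq_zero (hA : A ∈ Cset n) (hcol : ∀ k, k ≠ l → A.col (i, k) = 0)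
    (j : Fin n) :
    A (j, l) (i, l) = if j = i then 1 else 0 := by
  rw [← hA.2 j i, Finset.sum_eq_single_of_mem l (Finset.mem_univ l)]
  exact fun k _ hk => congrFun (hcol k hk) (j, k)

lemma submatrix_eq_diagonal (hA : A ∈ Cset n) (hcol : ∀ k, k ≠ l → A.col (i, k) = 0)
    (hm : m ≠ i) :
    A.submatrix ![(i, l), (m, l)] ![(i, l), (m, l)] = diagonal ![1, A (m, l) (m, l)] := by
  have hii : A (i, l) (i, l) = 1 := by simpa using apply_eq_of_col_eq_zero hA hcol i
  have hmi : A (m, l) (i, l) = 0 := by simpa [hm] using apply_eq_of_col_eq_zero hA hcol m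
  have him : A (i, l) (m, l) = 0 := by rw [← hA.1.1.apply, hmi, star_zero]
  ext s t
  fin_cases s <;> fin_cases t <;> simp [hii, hmi, him]

theorem eq_of_ker_mulVecLin_le (hA : A ∈ Cset n) (hB : B ∈ Cset n)
    (hker : LinearMap.ker A.mulVecLin ≤ LinearMap.ker B.mulVecLin) (hrank : A.rank ≤ 2)
    (hcol : ∀ k, k ≠ l → A.col (i, k) = 0) (hm : m ≠ i) (hne : A (m, l) (m, l) ≠ 0) :
    B = A := by
  let e : Fin 2 → Fin n × Fin n := ![(i, l), (m, l)]
  have hcolB (k : Fin n) (hk : k ≠ l) : B.col (i, k) = 0 :=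
    col_eq_zero_of_ker_mulVecLin_le hker (hcol k hk)
  have hdet : (A.submatrix e e).det ≠ 0 := by
    simpa [e, submatrix_eq_diagonal hA hcol hm] using hne
  obtain ⟨Y, hAY, hYe⟩ := exists_eq_submatrix_mul_of_rank_le hdet (by simpa using hrank)
  have hBY : B = B.submatrix id e * Y := eq_submatrix_mul_of_ker_mulVecLin_le hker hAY
  have hDY : B - A = (B - A).submatrix id e * Y := by
    rw [submatrix_sub, Pi.sub_apply, Pi.sub_apply, Matrix.sub_mul, ← hAY, ← hBY]
  have hDe : (B - A).submatrix e e = single 1 1 (B (m, l) (m, l) - A (m, l) (m, l)) := by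
    rw [submatrix_sub, Pi.sub_apply, Pi.sub_apply, submatrix_eq_diagonal hA hcol hm,
      submatrix_eq_diagonal hB hcolB hm, diagonal_sub]
    ext s t
    fin_cases s <;> fin_cases t <;> simp
  have hD := eq_conjTranspose_mul_submatrix_mul (hB.1.1.sub hA.1.1) hDY
  rw [hDe] at hD
  have hYm : Y 1 (m, l) = 1 := congrFun₂ hYe 1 1
  have htrace : ((B - A).submatrix (Prod.mk m) (Prod.mk m)).trace = 0 := by
    rw [submatrix_sub, Pi.sub_apply, Pi.sub_apply, trace_sub, sub_eq_zero]
    exact (hB.2 m m).trans (hA.2 m m).symm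
  exact sub_eq_zero.1
    (eq_zero_of_eq_conjTranspose_mul_single_mul hD (hYm ▸ one_ne_zero) htrace)

end Cset

theorem extreme_of_diag_pos_general {n : ℕ} {A : Matrix (Fin n × Fin n) (Fin n × Fin n) ℂ}
    (hA : A ∈ Cset n) (hrank : A.rank ≤ 2) {i l m : Fin n}
    (hcol : ∀ k, k ≠ l → A.col (i, k) = 0) (hm : m ≠ i) (hne : A (m, l) (m, l) ≠ 0) :
    A ∈ Set.extremePoints ℝ (Cset n) := by
  rw [mem_extremePoints_iff_left]
  refine ⟨hA, fun B hB C hC hABC => ?_⟩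
  have hker := ker_mulVecLin_le_of_mem_openSegment hB.1 hC.1 hABC
  exact Cset.eq_of_ker_mulVecLin_le hA hB hker hrank hcol hm hne

/-- Case (iia): if `A ∈ C_n` has rank 2, the rows and columns indexed by `2, …, n`
(i.e. by the pairs `(1,k)`, `k ≠ 1`) vanish, `a₁₁ = 1`, and some diagonal entry
`a_{ii}` with `1 < i < n²`, `i ≡ 1 (mod n)` (i.e. a pair index `(m,1)`, `m ≠ 1`)
is positive, then `A` is an extreme point of `C_n`. -/
theorem extreme_of_diag_pos (n : ℕ) (hn : 2 ≤ n)
    (A : Matrix (Fin n × Fin n) (Fin n × Fin n) ℂ) (hA : A ∈ Cset n)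
    (hrank : A.rank = 2)
    (hzero : ∀ k : Fin n, k ≠ ⟨0, by omega⟩ → ∀ q : Fin n × Fin n,
      A (⟨0, by omega⟩, k) q = 0 ∧ A q (⟨0, by omega⟩, k) = 0)
    (h11 : A (⟨0, by omega⟩, ⟨0, by omega⟩) (⟨0, by omega⟩, ⟨0, by omega⟩) = 1)
    (m : Fin n) (hm : m ≠ ⟨0, by omega⟩)
    (hpos : 0 < (A (m, ⟨0, by omega⟩) (m, ⟨0, by omega⟩)).re) :
    A ∈ Set.extremePoints ℝ (Cset n) := by
  exact extreme_of_diag_pos_general hA hrank.le (fun k hk => funext fun q => (hzero k hk q).2) hm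
    fun h => hpos.ne' (congrArg Complex.re h)
end
end
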